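/- arXiv:1506.02913 — 3 statements merged into one kernel-verified Lean document; each statement's English description precedes it below -/
import Mathlib

section
/- (Ehrenfeucht's compactness property, consequence.) For every n and every alphabet A, there is no infinite decreasing chain of word equations in n variables with solutions taken in the free monoid on A; that is, there is no sequence E_1, E_2, … of equations over n variables such that for every i ≥ 0 there is a morphism into the free monoid on A that is a solution of each of E_1, …, E_i but not a solution of E_{i+1}. -/
/-- A monoid morphism `h` from the free monoid on the variables `Ξ` to a monoid `M`
is a solution of the equation `E = (U, V)` if `h U = h V`. -/
def IsSolution {Ξ M : Type*} [Monoid M] (h : FreeMonoid Ξ →* M)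
    (E : FreeMonoid Ξ × FreeMonoid Ξ) : Prop :=
  h E.1 = h E.2

/-!
A free monoid embeds into the `2 × 2` matrices over a commutative ring `R`, so a solution in a free
monoid is a solution in matrices. Solving a word equation in `k × k` matrices over `R` is a system
of polynomial equations with integer coefficients in the `k²` entries of the image of each of the
finitely many variables, and by Hilbert's basis theorem every such system is equivalent to a finite
subsystem.
-/

section Affine

open Polynomial

variable {A S : Type*} [CommSemiring S]

/-- The representation of the free monoid on `A` by affine maps, where the letter `a` acts on `S[X]`
as `p ↦ X * p + c a`, and an affine map `p ↦ u * p + v` is encoded by the matrix `!![u, v; 0, 1]`.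
It is used to embed free monoids into matrices. -/
noncomputable def affineRepr (c : A → S) : FreeMonoid A →* Matrix (Fin 2) (Fin 2) S[X] :=
  FreeMonoid.lift fun a => !![X, C (c a); 0, 1]

theorem affineRepr_of (c : A → S) (a : A) :
    affineRepr c (FreeMonoid.of a) = !![X, C (c a); 0, 1] :=
  FreeMonoid.lift_eval_of _ a

theorem affineRepr_one_one (c : A → S) (w : FreeMonoid A) : affineRepr c w 1 1 = 1 := by
  induction w using FreeMonoid.recOn with
  | one => rw [map_one, Matrix.one_apply_eq]
  | of_mul a w ih => simp [affineRepr_of, Matrix.mul_apply, ih]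

theorem affineRepr_of_mul_zero_one (c : A → S) (a : A) (w : FreeMonoid A) :
    affineRepr c (FreeMonoid.of a * w) 0 1 = X * affineRepr c w 0 1 + C (c a) := by
  simp [affineRepr_of, Matrix.mul_apply, affineRepr_one_one]

theorem coeff_zero_affineRepr_of_mul (c : A → S) (a : A) (w : FreeMonoid A) :
    (affineRepr c (FreeMonoid.of a * w) 0 1).coeff 0 = c a := by
  simp [affineRepr_of_mul_zero_one]

theorem divX_affineRepr_of_mul (c : A → S) (a : A) (w : FreeMonoid A) :
    (affineRepr c (FreeMonoid.of a * w) 0 1).divX = affineRepr c w 0 1 := by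
  ext n
  simp [affineRepr_of_mul_zero_one, coeff_divX]

theorem affineRepr_of_mul_zero_one_ne_zero {c : A → S} (hc₀ : ∀ a, c a ≠ 0) (a : A)
    (w : FreeMonoid A) : affineRepr c (FreeMonoid.of a * w) 0 1 ≠ 0 := fun h =>
  hc₀ a <| by rw [← coeff_zero_affineRepr_of_mul c a w, h, coeff_zero]

theorem affineRepr_zero_one_injective {c : A → S} (hc : Function.Injective c)
    (hc₀ : ∀ a, c a ≠ 0) : Function.Injective fun w => affineRepr c w 0 1 := by
  intro v w (h : affineRepr c v 0 1 = affineRepr c w 0 1)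
  have entry_one : affineRepr c 1 0 1 = 0 := by simp
  induction v using FreeMonoid.recOn generalizing w with
  | one =>
    cases w using FreeMonoid.casesOn with
    | one => rfl
    | of_mul b w =>
      exact absurd (h.symm.trans entry_one) (affineRepr_of_mul_zero_one_ne_zero hc₀ b w)
  | of_mul a v ih =>
    cases w using FreeMonoid.casesOn with
    | one => exact absurd (h.trans entry_one) (affineRepr_of_mul_zero_one_ne_zero hc₀ a v)
    | of_mul b w =>
      have letters_eq : a = b := hc <| by
        simpa only [coeff_zero_affineRepr_of_mul] using congrArg (coeff · 0) h
      have tails_eq : v = w := ih <| by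
        simpa only [divX_affineRepr_of_mul] using congrArg divX h
      rw [letters_eq, tails_eq]

theorem affineRepr_injective {c : A → S} (hc : Function.Injective c) (hc₀ : ∀ a, c a ≠ 0) :
    Function.Injective (affineRepr c) := fun _ _ h =>
  affineRepr_zero_one_injective hc hc₀ (congrFun₂ h 0 1)

end Affine

section Generic

open MvPolynomial

variable {Ξ ι R : Type*} [Fintype ι] [DecidableEq ι] [CommRing R]

variable (Ξ ι) in
/-- The morphism sending each variable to a square matrix of independent indeterminates, the
indeterminate `X (x, i, j)` being the `(i, j)` entry of the image of `x`. Every morphism to matrices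
over a commutative ring is a specialization of it. -/
noncomputable def genericRepr :
    FreeMonoid Ξ →* Matrix ι ι (MvPolynomial (Ξ × ι × ι) ℤ) :=
  FreeMonoid.lift fun x => Matrix.of fun i j => X (x, i, j)

/-- The evaluation of polynomials at the matrix entries of the images of the variables under `h`;
it specializes `genericRepr` to `h`. -/
noncomputable def evalEntries (h : FreeMonoid Ξ →* Matrix ι ι R) :
    MvPolynomial (Ξ × ι × ι) ℤ →+* R :=
  eval₂Hom (Int.castRingHom R) fun p => h (FreeMonoid.of p.1) p.2.1 p.2.2

theorem evalEntries_genericRepr (h : FreeMonoid Ξ →* Matrix ι ι R) (w : FreeMonoid Ξ) (i j : ι) :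
    evalEntries h (genericRepr Ξ ι w i j) = h w i j := by
  have comp_eq : (evalEntries h).mapMatrix.toMonoidHom.comp (genericRepr Ξ ι) = h :=
    FreeMonoid.hom_eq fun x => by
      ext i j
      simp [genericRepr, evalEntries]
  exact congrFun₂ (DFunLike.congr_fun comp_eq w) i j

variable (ι) in
/-- The ideal generated by the entries of `U - V` at generic matrices, for a word equation `(U, V)`.
Its zeros are the solutions of the equation in `ι × ι` matrices. -/
noncomputable def equationIdeal (E : FreeMonoid Ξ × FreeMonoid Ξ) :
    Ideal (MvPolynomial (Ξ × ι × ι) ℤ) :=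
  Ideal.span (Set.range fun p : ι × ι =>
    genericRepr Ξ ι E.1 p.1 p.2 - genericRepr Ξ ι E.2 p.1 p.2)

theorem equationIdeal_le_ker_evalEntries_iff {h : FreeMonoid Ξ →* Matrix ι ι R}
    {E : FreeMonoid Ξ × FreeMonoid Ξ} :
    equationIdeal ι E ≤ RingHom.ker (evalEntries h) ↔ IsSolution h E := by
  simp [equationIdeal, Ideal.span_le, Set.range_subset_iff, evalEntries_genericRepr, sub_eq_zero,
    IsSolution, ← Matrix.ext_iff]

variable (ι) in
/-- **Ehrenfeucht's compactness property** for matrices. -/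
theorem exists_finset_forall_isSolution [Finite Ξ] {κ : Type*}
    (E : κ → FreeMonoid Ξ × FreeMonoid Ξ) :
    ∃ s : Finset κ, ∀ {R : Type*} [CommRing R] (h : FreeMonoid Ξ →* Matrix ι ι R),
      (∀ k ∈ s, IsSolution h (E k)) → ∀ k, IsSolution h (E k) := by
  obtain ⟨s, hs⟩ := Finset.exists_sup_eq_iSup fun k => equationIdeal ι (E k)
  refine ⟨s, fun h hsol k => equationIdeal_le_ker_evalEntries_iff.mp ?_⟩
  calc
    equationIdeal ι (E k) ≤ ⨆ l, equationIdeal ι (E l) :=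
      le_iSup (fun l => equationIdeal ι (E l)) k
    _ = s.sup fun k => equationIdeal ι (E k) := hs.symm
    _ ≤ RingHom.ker (evalEntries h) :=
      Finset.sup_le fun k hk => equationIdeal_le_ker_evalEntries_iff.mpr (hsol k hk)

end Generic

theorem isSolution_comp_iff {Ξ M N : Type*} [Monoid M] [Monoid N] {ρ : M →* N}
    (hρ : Function.Injective ρ) {h : FreeMonoid Ξ →* M} {E : FreeMonoid Ξ × FreeMonoid Ξ} :
    IsSolution (ρ.comp h) E ↔ IsSolution h E :=
  hρ.eq_iff

theorem no_infinite_decreasing_chain_of_word_equations_general {Ξ ι R M : Type*} [Finite Ξ]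
    [Fintype ι] [DecidableEq ι] [CommRing R] [Monoid M] {ρ : M →* Matrix ι ι R}
    (hρ : Function.Injective ρ) :
    ¬ ∃ E : ℕ → FreeMonoid Ξ × FreeMonoid Ξ,
      ∀ i : ℕ, ∃ h : FreeMonoid Ξ →* M,
        (∀ j < i, IsSolution h (E j)) ∧ ¬ IsSolution h (E i) := by
  rintro ⟨E, hE⟩
  obtain ⟨s, hs⟩ := exists_finset_forall_isSolution ι E
  obtain ⟨N, hN⟩ := s.exists_nat_subset_range
  obtain ⟨h, h_lt, h_not⟩ := hE N
  have solves_finset : ∀ j ∈ s, IsSolution (ρ.comp h) (E j) := fun j hj =>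
    (isSolution_comp_iff hρ).mpr (h_lt j (Finset.mem_range.mp (hN hj)))
  exact h_not ((isSolution_comp_iff hρ).mp (hs (ρ.comp h) solves_finset N))

/-- Consequence of Ehrenfeucht's compactness property: there is no infinite decreasing
chain of word equations in `n` variables with solutions in the free monoid on `A`. -/
theorem no_infinite_decreasing_chain_of_word_equations (n : ℕ) (A : Type*) :
    ¬ ∃ E : ℕ → FreeMonoid (Fin n) × FreeMonoid (Fin n),
      ∀ i : ℕ, ∃ h : FreeMonoid (Fin n) →* FreeMonoid A,
        (∀ j < i, IsSolution h (E j)) ∧ ¬ IsSolution h (E i) :=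
  no_infinite_decreasing_chain_of_word_equations_general
    (ρ := affineRepr (MvPolynomial.X : A → MvPolynomial A ℤ))
    (affineRepr_injective MvPolynomial.X_injective MvPolynomial.X_ne_zero)
end

section
/- There is a decreasing chain of 7 word equations in 3 variables with solutions taken in the free monoid on two letters; explicitly, with variables x, y, z, the sequence xyz = zxy; xyxzyz = zxzyxy; xz = zx; xy = yx; x = 1; y = 1; z = 1 is a decreasing chain. Hence dc(3) ≥ 7 for free monoids. -/
/-- The variable `x`. -/
def x : FreeMonoid (Fin 3) := FreeMonoid.of 0
/-- The variable `y`. -/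
def y : FreeMonoid (Fin 3) := FreeMonoid.of 1
/-- The variable `z`. -/
def z : FreeMonoid (Fin 3) := FreeMonoid.of 2

/-- The sequence of equations
`xyz = zxy; xyxzyz = zxzyxy; xz = zx; xy = yx; x = 1; y = 1; z = 1`. -/
def chain3 : Fin 7 → FreeMonoid (Fin 3) × FreeMonoid (Fin 3) :=
  ![(x * y * z, z * x * y),
    (x * y * x * z * y * z, z * x * z * y * x * y),
    (x * z, z * x),
    (x * y, y * x),
    (x, 1),
    (y, 1),
    (z, 1)]

section Monoid

variable {M : Type*} [Monoid M]

/-- The morphism sending `x`, `y`, `z` to `a`, `b`, `c`: the candidate solutions of equations in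
three variables are written as the triples of their values. -/
def assign (a b c : M) : FreeMonoid (Fin 3) →* M :=
  FreeMonoid.lift ![a, b, c]

@[simp] lemma assign_x (a b c : M) : assign a b c x = a := rfl

@[simp] lemma assign_y (a b c : M) : assign a b c y = b := rfl

@[simp] lemma assign_z (a b c : M) : assign a b c z = c := rfl

variable {h : FreeMonoid (Fin 3) →* M}

@[simp] lemma isSolution_chain3_zero :
    IsSolution h (chain3 0) ↔ Commute (h x * h y) (h z) := by
  simp [IsSolution, chain3, commute_iff_eq, mul_assoc]

@[simp] lemma isSolution_chain3_one :
    IsSolution h (chain3 1) ↔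
      h x * h y * h x * h z * h y * h z = h z * h x * h z * h y * h x * h y := by
  simp [IsSolution, chain3]

@[simp] lemma isSolution_chain3_two : IsSolution h (chain3 2) ↔ Commute (h x) (h z) := by
  simp [IsSolution, chain3, commute_iff_eq]

@[simp] lemma isSolution_chain3_three : IsSolution h (chain3 3) ↔ Commute (h x) (h y) := by
  simp [IsSolution, chain3, commute_iff_eq]

@[simp] lemma isSolution_chain3_four : IsSolution h (chain3 4) ↔ h x = 1 := by
  simp [IsSolution, chain3]

@[simp] lemma isSolution_chain3_five : IsSolution h (chain3 5) ↔ h y = 1 := by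
  simp [IsSolution, chain3]

@[simp] lemma isSolution_chain3_six : IsSolution h (chain3 6) ↔ h z = 1 := by
  simp [IsSolution, chain3]

lemma not_commute_of_sq_mul_ne {a b : M}
    (hab : (a * b) ^ 2 * b * (a * b) ≠ b * a * (a * b) ^ 2 * b) : ¬ Commute a b := by
  intro hcomm
  have hb : Commute b (a * b) := hcomm.symm.mul_right (Commute.refl b)
  apply hab
  calc (a * b) ^ 2 * b * (a * b) = (a * b) ^ 2 * (a * b) * b := hb.right_comm _
    _ = a * b * (a * b) ^ 2 * b := by rw [← pow_succ, pow_succ']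
    _ = b * a * (a * b) ^ 2 * b := by rw [hcomm.eq]

end Monoid

section Cancel

variable {M : Type*} [Monoid M] [IsCancelMul M] {a b : M}

lemma isSolution_assign_sq_chain3_one :
    IsSolution (assign a b ((a * b) ^ 2)) (chain3 1) ↔
      (a * b) ^ 2 * b * (a * b) = b * a * (a * b) ^ 2 * b := by
  calc IsSolution (assign a b ((a * b) ^ 2)) (chain3 1)
      ↔ a * b * a * ((a * b) ^ 2 * b * (a * b) * (a * b)) =
          a * b * a * (b * a * (a * b) ^ 2 * b * (a * b)) := by
        simp only [isSolution_chain3_one, assign_x, assign_y, assign_z, pow_two, mul_assoc]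
    _ ↔ (a * b) ^ 2 * b * (a * b) = b * a * (a * b) ^ 2 * b := by
        rw [mul_right_inj, mul_left_inj]

theorem exists_isSolution_lt_and_not_isSolution_chain3
    (hab : (a * b) ^ 2 * b * (a * b) ≠ b * a * (a * b) ^ 2 * b) :
    ∀ i : Fin 7, ∃ h : FreeMonoid (Fin 3) →* M,
      (∀ j : Fin 7, j < i → IsSolution h (chain3 j)) ∧ ¬ IsSolution h (chain3 i) := by
  have hcomm : ¬ Commute a b := not_commute_of_sq_mul_ne hab
  have hcomm_mul : ¬ Commute a (a * b) :=
    fun h => hcomm ((IsLeftRegular.all a).commute_mul_left_iff.mp h.symm)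
  have ha : a ≠ 1 := fun h => hcomm (h ▸ Commute.one_left b)
  intro i
  fin_cases i
  · exact ⟨assign a 1 b, by simp, by simpa⟩
  · exact ⟨assign a b ((a * b) ^ 2), by simp,
      isSolution_assign_sq_chain3_one.not.mpr hab⟩
  · exact ⟨assign a b (a * b), by simp [Fin.forall_fin_succ, mul_assoc],
      by simpa using hcomm_mul⟩
  · exact ⟨assign a b 1, by simp [Fin.forall_fin_succ], by simpa⟩
  · exact ⟨assign a 1 1, by simp [Fin.forall_fin_succ], by simpa⟩
  · exact ⟨assign 1 a 1, by simp [Fin.forall_fin_succ], by simpa⟩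
  · exact ⟨assign 1 1 a, by simp [Fin.forall_fin_succ], by simpa⟩

end Cancel

lemma freeMonoid_of_mul_ne_of_mul {α : Type*} {a b : α} (hab : a ≠ b) (u v : FreeMonoid α) :
    FreeMonoid.of a * u ≠ FreeMonoid.of b * v :=
  fun h => hab (List.head_eq_of_cons_eq (congrArg FreeMonoid.toList h))

theorem chain3_is_decreasing_chain_general {α : Type*} [Nontrivial α] :
    ∀ i : Fin 7, ∃ h : FreeMonoid (Fin 3) →* FreeMonoid α,
      (∀ j : Fin 7, j < i → IsSolution h (chain3 j)) ∧ ¬ IsSolution h (chain3 i) := by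
  obtain ⟨a, b, hab⟩ := exists_pair_ne α
  refine exists_isSolution_lt_and_not_isSolution_chain3 (a := .of a) (b := .of b) ?_
  simpa only [pow_two, mul_assoc] using freeMonoid_of_mul_ne_of_mul hab _ _

/-- The above sequence of 7 word equations in 3 variables is a decreasing chain,
with solutions taken in the free monoid on two letters. Hence dc(3) ≥ 7. -/
theorem chain3_is_decreasing_chain :
    ∀ i : Fin 7, ∃ h : FreeMonoid (Fin 3) →* FreeMonoid (Fin 2),
      (∀ j : Fin 7, j < i → IsSolution h (chain3 j)) ∧ ¬ IsSolution h (chain3 i) :=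
  chain3_is_decreasing_chain_general
end

section
/- For every m ≥ 3 and n = 4m, there is an independent system of m²(m−1)(m−2)/6 word equations in n variables, with solutions taken in the free monoid on two letters, having a nonperiodic solution. Explicitly, with variables x_i, y_i, z_i, t_i for 1 ≤ i ≤ m, the system consisting of the equations E(i,j,k,l): x_i x_j x_k y_i y_j y_k z_i z_j z_k t_l = t_l x_i x_j x_k y_i y_j y_k z_i z_j z_k, for i < j < k and l ∈ {1, …, m}, is independent and has a nonperiodic solution. Hence is'(4m) ≥ m²(m−1)(m−2)/6. -/
/-- A solution is periodic if the images of all variables are powers of a common word. -/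
def IsPeriodic {Ξ A : Type*} (h : FreeMonoid Ξ →* FreeMonoid A) : Prop :=
  ∃ t : FreeMonoid A, ∀ v : Ξ, ∃ k : ℕ, h (FreeMonoid.of v) = t ^ k

/-- The variable `x_i` (the variables are the `4 * m` pairs in `Fin 4 × Fin m`). -/
def xv {m : ℕ} (i : Fin m) : FreeMonoid (Fin 4 × Fin m) := FreeMonoid.of (0, i)
/-- The variable `y_i`. -/
def yv {m : ℕ} (i : Fin m) : FreeMonoid (Fin 4 × Fin m) := FreeMonoid.of (1, i)
/-- The variable `z_i`. -/
def zv {m : ℕ} (i : Fin m) : FreeMonoid (Fin 4 × Fin m) := FreeMonoid.of (2, i)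
/-- The variable `t_i`. -/
def tv {m : ℕ} (i : Fin m) : FreeMonoid (Fin 4 × Fin m) := FreeMonoid.of (3, i)

/-- The equation `E(i,j,k,l) :
x_i x_j x_k y_i y_j y_k z_i z_j z_k t_l = t_l x_i x_j x_k y_i y_j y_k z_i z_j z_k`. -/
def eqn {m : ℕ} (i j k l : Fin m) :
    FreeMonoid (Fin 4 × Fin m) × FreeMonoid (Fin 4 × Fin m) :=
  (xv i * xv j * xv k * yv i * yv j * yv k * zv i * zv j * zv k * tv l,
   tv l * (xv i * xv j * xv k * yv i * yv j * yv k * zv i * zv j * zv k))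

/-- The system consisting of the equations `E(i,j,k,l)` for `i < j < k` and arbitrary `l`. -/
def system (m : ℕ) : Set (FreeMonoid (Fin 4 × Fin m) × FreeMonoid (Fin 4 × Fin m)) :=
  {e | ∃ i j k l : Fin m, i < j ∧ j < k ∧ e = eqn i j k l}

section OrderedProducts

variable {α M : Type*} [Monoid M]

theorem prod_map_ite_one (p : α → Prop) [DecidablePred p] (φ : α → M) (l : List α) :
    (l.map fun a => if p a then φ a else 1).prod = ((l.filter p).map φ).prod := by
  induction l with
  | nil => rfl
  | cons a l ih => by_cases h : p a <;> simp [h, ih]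

variable [LinearOrder α]

theorem prod_map_ite_mem_comm {l₁ l₂ : List α} (h₁ : l₁.SortedLT) (h₂ : l₂.SortedLT) (φ : α → M) :
    (l₁.map fun a => if a ∈ l₂ then φ a else 1).prod =
      (l₂.map fun a => if a ∈ l₁ then φ a else 1).prod := by
  have filter_comm : l₁.filter (· ∈ l₂) = l₂.filter (· ∈ l₁) :=
    (h₁.pairwise.filter _).sortedLT.eq_of_mem_iff (h₂.pairwise.filter _).sortedLT
      (by simp [and_comm])
  rw [prod_map_ite_one, prod_map_ite_one, filter_comm]

theorem prod_ofFn_extend_one {k n : ℕ} (f : Fin k ↪o α) (g : Fin n ↪o α) (w : Fin k → M) :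
    (List.ofFn fun r => Function.extend f w 1 (g r)).prod =
      (List.ofFn fun s => if ∃ r, g r = f s then w s else 1).prod := by
  have extend_eq_ite (a : α) :
      Function.extend f w 1 a = if a ∈ List.ofFn f then Function.extend f w 1 a else 1 := by
    split_ifs with ha
    · rfl
    · exact Function.extend_apply' _ _ _ (by simpa using ha)
  calc (List.ofFn fun r => Function.extend f w 1 (g r)).prod
      = ((List.ofFn g).map fun a =>
          if a ∈ List.ofFn f then Function.extend f w 1 a else 1).prod := by
        simp only [← extend_eq_ite, List.map_ofFn, Function.comp_def]
    _ = ((List.ofFn f).map fun a =>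
          if a ∈ List.ofFn g then Function.extend f w 1 a else 1).prod :=
        prod_map_ite_mem_comm g.strictMono.sortedLT_ofFn f.strictMono.sortedLT_ofFn _
    _ = (List.ofFn fun s => if ∃ r, g r = f s then w s else 1).prod := by
        simp only [List.map_ofFn, Function.comp_def, f.injective.extend_apply, List.mem_ofFn]

theorem orderEmbedding_eq_of_range_subset {n : ℕ} {f g : Fin n ↪o α}
    (h : Set.range f ⊆ Set.range g) : f = g := by
  refine Set.powersetCard.ofFinEmbEquiv.injective (Set.powersetCard.eq_iff_subset.2 fun a ha => ?_)
  rw [Set.powersetCard.mem_coe_iff, Set.powersetCard.mem_ofFinEmbEquiv_iff_mem_range] at ha ⊢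
  exact h ha

end OrderedProducts

section System

variable {m : ℕ}

/-- The equation `E(i,j,k,l)` for the increasing triple `i < j < k` encoded as the order
embedding `f = (i, j, k)`. -/
def tripleEqn (f : Fin 3 ↪o Fin m) (l : Fin m) :
    FreeMonoid (Fin 4 × Fin m) × FreeMonoid (Fin 4 × Fin m) :=
  eqn (f 0) (f 1) (f 2) l

theorem mem_system_iff {e : FreeMonoid (Fin 4 × Fin m) × FreeMonoid (Fin 4 × Fin m)} :
    e ∈ system m ↔ ∃ f l, tripleEqn f l = e := by
  constructor
  · rintro ⟨i, j, k, l, hij, hjk, rfl⟩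
    exact ⟨OrderEmbedding.ofStrictMono ![i, j, k] (by simp [hij, hjk]), l, rfl⟩
  · rintro ⟨f, l, rfl⟩
    exact ⟨f 0, f 1, f 2, l, by simp, by simp, rfl⟩

theorem eqn_inj {i j k l i' j' k' l' : Fin m} :
    eqn i j k l = eqn i' j' k' l' ↔ i = i' ∧ j = j' ∧ k = k' ∧ l = l' := by
  refine ⟨fun h => ?_, by rintro ⟨rfl, rfl, rfl, rfl⟩; rfl⟩
  have left_letters := congrArg (fun e => FreeMonoid.toList e.1) h
  simp only [eqn, xv, yv, zv, tv, FreeMonoid.toList_mul, FreeMonoid.toList_of] at left_letters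
  simp_all

theorem tripleEqn_injective : Function.Injective2 (tripleEqn (m := m)) := by
  intro f g l l' h
  obtain ⟨h₀, h₁, h₂, hl⟩ := eqn_inj.1 h
  refine ⟨?_, hl⟩
  ext s
  fin_cases s <;> simp_all

theorem ncard_system (m : ℕ) : (system m).ncard = m.choose 3 * m := by
  have system_eq_range : system m = Set.range (Function.uncurry (tripleEqn (m := m))) := by
    ext e
    simp [mem_system_iff]
  rw [system_eq_range, Set.ncard_range_of_injective tripleEqn_injective.uncurry, Nat.card_prod,
    Nat.card_congr Set.powersetCard.ofFinEmbEquiv, Set.powersetCard.card, Nat.card_fin]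

theorem isSolution_eqn_iff {M : Type*} [Monoid M] (h : FreeMonoid (Fin 4 × Fin m) →* M)
    (i j k l : Fin m) :
    IsSolution h (eqn i j k l) ↔
      Commute (h (xv i * xv j * xv k * yv i * yv j * yv k * zv i * zv j * zv k)) (h (tv l)) := by
  simp only [IsSolution, eqn, map_mul, Commute, SemiconjBy]

end System

theorem choose_three_mul_self (m : ℕ) : m.choose 3 * m = m ^ 2 * (m - 1) * (m - 2) / 6 := by
  calc m.choose 3 * m = m.descFactorial 3 * m / 6 := by
        rw [Nat.choose_eq_descFactorial_div_factorial,
          Nat.div_mul_right_comm (Nat.factorial_dvd_descFactorial m 3)]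
        rfl
    _ = m ^ 2 * (m - 1) * (m - 2) / 6 := by
        congr 1
        simp only [Nat.descFactorial, Nat.sub_zero]
        ring

section Independence

instance {A : Type*} [DecidableEq A] : DecidableEq (FreeMonoid A) :=
  FreeMonoid.toList.injective.decidableEq

/-- The images of `x`, `y`, `z` (rows) at the three distinguished indices (columns). Each column
multiplies to `ababa`, where `a = 0` and `b = 1`. -/
def sepWord : Fin 3 → Fin 3 → FreeMonoid (Fin 2) := fun r s =>
  FreeMonoid.ofList <|
    ![![[],        [],        [0, 1]],
      ![[0, 1],    [0, 1, 0], [0]],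
      ![[0, 1, 0], [1, 0],    [1, 0]]] r s

/-- The word `ababa`, which is the image of the distinguished `t`. -/
def sepT : FreeMonoid (Fin 2) := FreeMonoid.ofList [0, 1, 0, 1, 0]

/-- The product, row by row, of the columns of `sepWord` lying in `S`. -/
def sepProd (S : Finset (Fin 3)) : FreeMonoid (Fin 2) :=
  (List.ofFn fun r => (List.ofFn fun s => if s ∈ S then sepWord r s else 1).prod).prod

-- For instance, `{0, 1}` gives `ab·aba·aba·ba = (ababa)²`.
theorem sepProd_eq_pow_card : ∀ S ≠ Finset.univ, sepProd S = sepT ^ S.card := by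
  decide

-- The full product is `ab·ab·aba·a·aba·ba·ba = ababa·baaab·ababa`.
theorem not_commute_sepProd_univ : ¬ Commute (sepProd Finset.univ) sepT := by
  unfold Commute SemiconjBy
  decide

theorem commute_sepProd_iff (S : Finset (Fin 3)) :
    Commute (sepProd S) sepT ↔ S ≠ Finset.univ := by
  refine ⟨?_, fun hS => ?_⟩
  · rintro hcomm rfl
    exact not_commute_sepProd_univ hcomm
  · rw [sepProd_eq_pow_card S hS]
    exact Commute.pow_self _ _

variable {m : ℕ}

/-- The morphism that falsifies exactly the equation `tripleEqn f d` of the system. -/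
noncomputable def sepHom (f : Fin 3 ↪o Fin m) (d : Fin m) :
    FreeMonoid (Fin 4 × Fin m) →* FreeMonoid (Fin 2) :=
  FreeMonoid.lift <| Function.uncurry
    ![Function.extend f (sepWord 0) 1, Function.extend f (sepWord 1) 1,
      Function.extend f (sepWord 2) 1, Pi.mulSingle d sepT]

/-- The positions in the triple `f` whose entries also occur in `g`. -/
def commonPositions (f g : Fin 3 ↪o Fin m) : Finset (Fin 3) := {s | ∃ r, g r = f s}

theorem commonPositions_eq_univ_iff {f g : Fin 3 ↪o Fin m} :
    commonPositions f g = Finset.univ ↔ f = g := by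
  refine ⟨fun h => orderEmbedding_eq_of_range_subset ?_, ?_⟩
  · rintro _ ⟨s, rfl⟩
    simpa [commonPositions] using h.ge (Finset.mem_univ s)
  · rintro rfl
    simp [commonPositions]

theorem sepHom_tv (f : Fin 3 ↪o Fin m) (d l : Fin m) :
    sepHom f d (tv l) = if l = d then sepT else 1 := by
  simp [sepHom, tv, Pi.mulSingle_apply]

theorem sepHom_triple (f g : Fin 3 ↪o Fin m) (d : Fin m) :
    sepHom f d (xv (g 0) * xv (g 1) * xv (g 2) * yv (g 0) * yv (g 1) * yv (g 2) *
      zv (g 0) * zv (g 1) * zv (g 2)) = sepProd (commonPositions f g) := by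
  calc _ = (List.ofFn fun r =>
        (List.ofFn fun s => Function.extend f (sepWord r) 1 (g s)).prod).prod := by
        simp [sepHom, xv, yv, zv, mul_assoc]
    _ = sepProd (commonPositions f g) := by
        simp only [prod_ofFn_extend_one, sepProd, commonPositions, Finset.mem_filter_univ]

theorem isSolution_sepHom_iff (f g : Fin 3 ↪o Fin m) (d l : Fin m) :
    IsSolution (sepHom f d) (tripleEqn g l) ↔ tripleEqn g l ≠ tripleEqn f d := by
  rw [tripleEqn, isSolution_eqn_iff, sepHom_triple, sepHom_tv, ← tripleEqn, Ne,
    tripleEqn_injective.eq_iff]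
  split_ifs with hl
  · simp [commute_sepProd_iff, commonPositions_eq_univ_iff, hl, eq_comm]
  · simp [hl]

end Independence

section Nonperiodic

theorem IsPeriodic.commute_of {Ξ A : Type*} {h : FreeMonoid Ξ →* FreeMonoid A} (hh : IsPeriodic h)
    (u v : Ξ) : Commute (h (FreeMonoid.of u)) (h (FreeMonoid.of v)) := by
  obtain ⟨t, ht⟩ := hh
  obtain ⟨p, hp⟩ := ht u
  obtain ⟨q, hq⟩ := ht v
  rw [hp, hq]
  exact Commute.pow_pow_self t p q

theorem commute_of_of_iff {A : Type*} {a b : A} :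
    Commute (FreeMonoid.of a) (FreeMonoid.of b) ↔ a = b := by
  refine ⟨fun h => ?_, by rintro rfl; rfl⟩
  have letters : [a, b] = [b, a] := congrArg FreeMonoid.toList h.eq
  exact (List.cons.inj letters).1

variable {m : ℕ} {A : Type*}

/-- The morphism erasing `x_i`, `y_i`, `z_i` and sending `t_i` to the letter `c i`. -/
def letterHom (c : Fin m → A) : FreeMonoid (Fin 4 × Fin m) →* FreeMonoid A :=
  FreeMonoid.lift <| Function.uncurry ![1, 1, 1, fun i => FreeMonoid.of (c i)]

theorem isSolution_letterHom (c : Fin m → A) (i j k l : Fin m) :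
    IsSolution (letterHom c) (eqn i j k l) := by
  simp [isSolution_eqn_iff, letterHom, xv, yv, zv]

theorem not_isPeriodic_letterHom {c : Fin m → A} {i j : Fin m} (hc : c i ≠ c j) :
    ¬ IsPeriodic (letterHom c) := fun h =>
  hc <| commute_of_of_iff.1 <| by simpa [letterHom] using h.commute_of (3, i) (3, j)

end Nonperiodic

/-- For every `m ≥ 3`, the above system of word equations in `n = 4m` variables consists of
`m²(m-1)(m-2)/6` equations, is independent (with solutions taken in the free monoid on two
letters), and has a nonperiodic solution. Hence is'(4m) ≥ m²(m−1)(m−2)/6. -/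
theorem system_card_independent_nonperiodic (m : ℕ) (hm : 3 ≤ m) :
    (system m).ncard = m ^ 2 * (m - 1) * (m - 2) / 6 ∧
    (∀ e ∈ system m, ∃ h : FreeMonoid (Fin 4 × Fin m) →* FreeMonoid (Fin 2),
      (∀ e' ∈ system m, e' ≠ e → IsSolution h e') ∧ ¬ IsSolution h e) ∧
    (∃ h : FreeMonoid (Fin 4 × Fin m) →* FreeMonoid (Fin 2),
      (∀ e ∈ system m, IsSolution h e) ∧ ¬ IsPeriodic h) := by
  refine ⟨(ncard_system m).trans (choose_three_mul_self m), fun e he => ?_, ?_⟩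
  · obtain ⟨f, d, rfl⟩ := mem_system_iff.1 he
    refine ⟨sepHom f d, fun e' he' hne => ?_, fun h => (isSolution_sepHom_iff f f d d).1 h rfl⟩
    obtain ⟨g, l, rfl⟩ := mem_system_iff.1 he'
    exact (isSolution_sepHom_iff f g d l).2 hne
  · let c : Fin m → Fin 2 := fun i => if i.val = 0 then 0 else 1
    have hc : c ⟨0, by omega⟩ ≠ c ⟨1, by omega⟩ := by simp [c]
    refine ⟨letterHom c, ?_, not_isPeriodic_letterHom hc⟩
    rintro e ⟨i, j, k, l, -, -, rfl⟩
    exact isSolution_letterHom c i j k l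
end
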